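/- arXiv:1011.1044 — 2 statements merged into one kernel-verified Lean document; each statement's English description precedes it below -/
import Mathlib

section
/- Let A = {A_0,…,A_d} be an association scheme on v vertices with principal idempotents E_0,…,E_d and matrix of eigenvalues P, and let n ≥ 1. Then for all x, y ∈ V^n, in the polynomial ring ℂ[s_0,…,s_d] one has Σ_α s^α·(A_α)_{x,y} = Σ_β (Ps)^β·(E_β)_{x,y}, where both sums are over all vectors of d+1 nonnegative integers summing to n, and (Ps)^β = Π_{j=0}^{d} (Σ_{i=0}^{d} P_{j,i}·s_i)^{β(j)}. -/
open Matrix Finset MvPolynomial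

/-- An association scheme with `d` classes on the finite vertex set `V`. -/
structure AssocScheme (d : ℕ) (V : Type) [Fintype V] [DecidableEq V] : Type where
  A : Fin (d + 1) → Matrix V V ℂ
  entries_zero_or_one : ∀ i x y, A i x y = 0 ∨ A i x y = 1
  A_zero : A 0 = 1
  A_sum : ∑ i, A i = Matrix.of fun _ _ => 1
  transpose_mem : ∀ i, ∃ j, (A i)ᵀ = A j
  mul_eq_lin_comb : ∀ i j, ∃ p : Fin (d + 1) → ℂ, A i * A j = ∑ k, p k • A k
  mul_comm' : ∀ i j, A i * A j = A j * A i

open Classical in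
/-- `h(x,y)`: the vector whose `r`-th entry counts coordinates `j` with `(A_r)_{x_j,y_j} = 1`. -/
noncomputable def AssocScheme.profile {d : ℕ} {V : Type} [Fintype V] [DecidableEq V]
    (S : AssocScheme d V) (n : ℕ) (x y : Fin n → V) : Fin (d + 1) → ℕ :=
  fun r => (Finset.univ.filter fun j : Fin n => S.A r (x j) (y j) = 1).card

open Classical in
/-- The matrix `A_α` of the generalized Hamming scheme `H(n,A)`. -/
noncomputable def AssocScheme.ham {d : ℕ} {V : Type} [Fintype V] [DecidableEq V]
    (S : AssocScheme d V) (n : ℕ) (α : Fin (d + 1) → ℕ) :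
    Matrix (Fin n → V) (Fin n → V) ℂ :=
  Matrix.of fun x y => if S.profile n x y = α then 1 else 0

open Classical in
/-- The matrix `E_β` built from the idempotents `E_0, …, E_d`. -/
noncomputable def idemMat {d : ℕ} {V : Type} [Fintype V] [DecidableEq V]
    (E : Fin (d + 1) → Matrix V V ℂ) (n : ℕ) (β : Fin (d + 1) → ℕ) :
    Matrix (Fin n → V) (Fin n → V) ℂ :=
  Matrix.of fun x y =>
    ∑ f ∈ Finset.univ.filter
        (fun f : Fin n → Fin (d + 1) =>
          ∀ r, (Finset.univ.filter fun j => f j = r).card = β r),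
      ∏ j, E (f j) (x j) (y j)

/-!
Both sides equal `∏ j, ∑ i, (A i) (x j) (y j) • s i`. Expanding this product and grouping the choice
functions by their fibre sizes gives a sum over `α` whose coefficients are built from the `A i` just
as `E_β` is built from the `E k`; since exactly one `A i` is nonzero at each position, these
coefficients are the entries of `A_α`. Substituting `A i = ∑ k, P k i • E k` turns each factor into
`∑ k, (E k) (x j) (y j) • (P s) k`, and the same expansion gives the right-hand side.
-/

section FiberCard

variable {ι κ : Type*} [Fintype ι] [DecidableEq κ]

/-- The vector of fibre sizes of `f`. It is the exponent vector of the monomial that the choice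
function `f` contributes to an expanded product of sums. -/
def fiberCard (f : ι → κ) (k : κ) : ℕ :=
  #{j | f j = k}

variable [Fintype κ]

lemma prod_comp_eq_prod_pow_fiberCard {M : Type*} [CommMonoid M] (t : κ → M) (f : ι → κ) :
    ∏ j, t (f j) = ∏ k, t k ^ fiberCard f k := by
  simp only [← prod_fiberwise' univ f t, prod_const, fiberCard]

lemma fiberCard_mem_piAntidiag (f : ι → κ) :
    fiberCard f ∈ piAntidiag univ (Fintype.card ι) := by
  simp only [mem_piAntidiag, mem_univ, implies_true, and_true]
  exact (card_eq_sum_card_fiberwise fun j _ => mem_univ (f j)).symm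

theorem prod_sum_smul_eq_sum_piAntidiag [DecidableEq ι] {K R : Type*} [CommSemiring K]
    [CommSemiring R] [Algebra K R] (c : ι → κ → K) (t : κ → R) :
    ∏ j, ∑ k, c j k • t k =
      ∑ β ∈ piAntidiag univ (Fintype.card ι),
        (∑ f with fiberCard f = β, ∏ j, c j (f j)) • ∏ k, t k ^ β k :=
  calc ∏ j, ∑ k, c j k • t k
      = ∑ f : ι → κ, (∏ j, c j (f j)) • ∏ k, t k ^ fiberCard f k := by
        simp only [prod_univ_sum, Fintype.piFinset_univ, prod_smul,
          prod_comp_eq_prod_pow_fiberCard]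
    _ = ∑ β ∈ piAntidiag univ (Fintype.card ι), ∑ f with fiberCard f = β,
          (∏ j, c j (f j)) • ∏ k, t k ^ fiberCard f k :=
        (sum_fiberwise_of_maps_to (fun f _ => fiberCard_mem_piAntidiag f) _).symm
    _ = _ := by
        refine sum_congr rfl fun β _ => ?_
        rw [sum_smul]
        refine sum_congr rfl fun f hf => ?_
        rw [(mem_filter.mp hf).2]

end FiberCard

lemma sum_sum_smul_smul_comm {ι κ K R : Type*} [Fintype ι] [Fintype κ] [CommSemiring K]
    [AddCommMonoid R] [Module K R] (P : Matrix κ ι K) (e : κ → K) (s : ι → R) :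
    ∑ i, (∑ k, P k i • e k) • s i = ∑ k, e k • ∑ i, P k i • s i := by
  simp only [sum_smul, smul_sum, smul_eq_mul, mul_smul]
  rw [sum_comm]
  exact sum_congr rfl fun k _ => sum_congr rfl fun i _ => smul_comm _ _ _

section GeneralizedHamming

variable {V : Type} [Fintype V] [DecidableEq V] {d : ℕ}

lemma idemMat_apply (E : Fin (d + 1) → Matrix V V ℂ) (n : ℕ) (β : Fin (d + 1) → ℕ)
    (x y : Fin n → V) :
    idemMat E n β x y = ∑ f with fiberCard f = β, ∏ j, E (f j) (x j) (y j) := by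
  simp only [idemMat, of_apply, funext_iff, fiberCard]

theorem sum_idemMat_smul_prod_pow {R : Type*} [CommSemiring R] [Algebra ℂ R]
    (E : Fin (d + 1) → Matrix V V ℂ) (n : ℕ) (x y : Fin n → V) (t : Fin (d + 1) → R) :
    ∑ β ∈ Finset.Nat.antidiagonalTuple (d + 1) n, idemMat E n β x y • ∏ k, t k ^ β k =
      ∏ j, ∑ k, E k (x j) (y j) • t k := by
  simp only [prod_sum_smul_eq_sum_piAntidiag, Fintype.card_fin,
    piAntidiag_univ_fin_eq_antidiagonalTuple, idemMat_apply]

namespace AssocScheme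

variable (S : AssocScheme d V)

lemma existsUnique_A_apply_eq_one (a b : V) : ∃! i, S.A i a b = 1 := by
  classical
  have sum_entries : ∑ i, S.A i a b = 1 := by
    simpa only [Matrix.sum_apply, of_apply] using congr_fun₂ S.A_sum a b
  have entry_eq_ite (i) : S.A i a b = if S.A i a b = 1 then 1 else 0 := by
    rcases S.entries_zero_or_one i a b with h | h <;> simp [h]
  have card_eq_one : #{i | S.A i a b = 1} = 1 := by
    rw [sum_congr rfl fun i _ => entry_eq_ite i, sum_boole] at sum_entries
    exact_mod_cast sum_entries
  simpa using card_eq_one_iff_existsUnique.mp card_eq_one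

/-- The index of the class of the scheme containing the pair `(a, b)`, through which the
01-matrices `S.A` are encoded as a single colouring of `V × V`. -/
noncomputable def classIndex (a b : V) : Fin (d + 1) :=
  (S.existsUnique_A_apply_eq_one a b).choose

lemma A_apply_eq_one_iff {i : Fin (d + 1)} {a b : V} :
    S.A i a b = 1 ↔ S.classIndex a b = i := by
  have classIndex_spec := (S.existsUnique_A_apply_eq_one a b).choose_spec
  exact ⟨fun h => (classIndex_spec.2 i h).symm, fun h => h ▸ classIndex_spec.1⟩

lemma A_apply (i : Fin (d + 1)) (a b : V) :
    S.A i a b = if S.classIndex a b = i then 1 else 0 := by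
  split_ifs with h
  · exact S.A_apply_eq_one_iff.mpr h
  · exact (S.entries_zero_or_one i a b).resolve_right (mt S.A_apply_eq_one_iff.mp h)

lemma profile_eq_fiberCard_classIndex (n : ℕ) (x y : Fin n → V) :
    S.profile n x y = fiberCard fun j => S.classIndex (x j) (y j) := by
  ext i
  simp only [profile, fiberCard, A_apply_eq_one_iff]

theorem ham_eq_idemMat_A (n : ℕ) (α : Fin (d + 1) → ℕ) : S.ham n α = idemMat S.A n α := by
  ext x y
  have prod_entries (f : Fin n → Fin (d + 1)) :
      ∏ j, S.A (f j) (x j) (y j) = if (fun j => S.classIndex (x j) (y j)) = f then 1 else 0 := by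
    simp only [A_apply, Fintype.prod_boole, funext_iff]
    congr
  simp only [idemMat_apply, prod_entries, sum_ite_eq, mem_filter_univ, ham, of_apply,
    profile_eq_fiberCard_classIndex]

end AssocScheme

theorem ham_eq_idem_generating_function_general {e : ℕ} {R : Type*} [CommSemiring R] [Algebra ℂ R]
    (S : AssocScheme d V) (E : Fin (e + 1) → Matrix V V ℂ)
    (P : Matrix (Fin (e + 1)) (Fin (d + 1)) ℂ) (hAE : ∀ i, S.A i = ∑ j, P j i • E j)
    (n : ℕ) (x y : Fin n → V) (s : Fin (d + 1) → R) :
    ∑ α ∈ Finset.Nat.antidiagonalTuple (d + 1) n, S.ham n α x y • ∏ i, s i ^ α i =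
      ∑ β ∈ Finset.Nat.antidiagonalTuple (e + 1) n,
        idemMat E n β x y • ∏ j, (∑ i, P j i • s i) ^ β j := by
  have entrywise_substitution (a b : V) :
      ∑ i, S.A i a b • s i = ∑ k, E k a b • ∑ i, P k i • s i := by
    simp only [hAE, Matrix.sum_apply, Matrix.smul_apply, sum_sum_smul_smul_comm]
  simp only [S.ham_eq_idemMat_A, sum_idemMat_smul_prod_pow, entrywise_substitution]

end GeneralizedHamming

/-- `Σ_α s^α (A_α)_{x,y} = Σ_β (Ps)^β (E_β)_{x,y}`. -/
theorem ham_eq_idem_generating_function {V : Type} [Fintype V] [DecidableEq V]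
    {d : ℕ} (S : AssocScheme d V)
    (E : Fin (d + 1) → Matrix V V ℂ)
    (hE0 : E 0 = (Fintype.card V : ℂ)⁻¹ • Matrix.of fun _ _ => 1)
    (hEsum : ∑ j, E j = 1)
    (hEherm : ∀ j, (E j)ᴴ = E j)
    (hEidem : ∀ j, E j * E j = E j)
    (hEorth : ∀ j k, j ≠ k → E j * E k = 0)
    (P : Matrix (Fin (d + 1)) (Fin (d + 1)) ℂ)
    (hAE : ∀ i, S.A i = ∑ j, P j i • E j)
    (n : ℕ) (hn : 1 ≤ n) (x y : Fin n → V) :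
    (∑ α ∈ Finset.Nat.antidiagonalTuple (d + 1) n,
        MvPolynomial.C (S.ham n α x y) * ∏ i : Fin (d + 1), MvPolynomial.X i ^ α i)
      = ∑ β ∈ Finset.Nat.antidiagonalTuple (d + 1) n,
          MvPolynomial.C (idemMat E n β x y) *
            ∏ j : Fin (d + 1),
              (∑ i : Fin (d + 1), MvPolynomial.C (P j i) * MvPolynomial.X i) ^ β j := by
  simpa only [C_mul'] using
    ham_eq_idem_generating_function_general S E P hAE n x y (X (R := ℂ))
end

section
/- (Classical MacWilliams theorem.) Let q be a prime power, n ≥ 1, and let C be a linear code, i.e., a linear subspace of GF(q)^n. Let the dual code be C⊥ = {y ∈ GF(q)^n : Σ_{j=1}^{n} x_j·y_j = 0 for all x ∈ C}, and let the weight enumerator be W_C(x,y) = Σ_{c ∈ C} x^{n − wt(c)}·y^{wt(c)}, where wt(c) is the number of nonzero coordinates of c. Then W_{C⊥}(x,y) = (1/|C|)·W_C(x + (q−1)y, x − y). -/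
open Finset MvPolynomial

open Classical in
/-- The Hamming weight enumerator `W_C(x,y) = Σ_{c ∈ C} x^{n-wt(c)} y^{wt(c)}`,
a polynomial in the two variables `X 0` and `X 1`. -/
noncomputable def hammingWeightEnum {F : Type} [Field F] [Fintype F] (n : ℕ)
    (Cd : Finset (Fin n → F)) : MvPolynomial (Fin 2) ℂ :=
  ∑ c ∈ Cd,
    MvPolynomial.X 0 ^ (n - (Finset.univ.filter fun j => c j ≠ 0).card) *
      MvPolynomial.X 1 ^ (Finset.univ.filter fun j => c j ≠ 0).card

open Classical in
/-- The dual code `C⊥ = {y : Σ_j x_j y_j = 0 for all x ∈ C}`. -/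
noncomputable def dualLinearCode {F : Type} [Field F] [Fintype F] (n : ℕ)
    (Cd : Finset (Fin n → F)) : Finset (Fin n → F) :=
  Finset.univ.filter fun y => ∀ x ∈ Cd, ∑ j, x j * y j = 0

/-!
Fix a primitive additive character `ψ` of the alphabet. Summing `ψ (c ⬝ᵥ v)` over the codewords `c`
detects whether `v` is orthogonal to the code, which gives a Poisson summation formula: summing the
Fourier transform of `f` over `C` is `|C|` times summing `f` over `C⊥`. The function
`v ↦ x ^ (n - wt v) * y ^ wt v` is a product over the coordinates, so its Fourier transform is the
product of the one-coordinate transforms, and these replace `x` by `x + (q - 1) y` and `y` by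
`x - y`. This works over every finite commutative ring with a primitive character in a domain, and
a finite field has one in `ℂ`, hence in `ℂ[x, y]`.
-/

section PoissonSummation

variable {R M N A : Type*} [CommRing R] [AddCommGroup M] [Module R M] [AddCommGroup N] [Module R N]

section Character

variable [CommMonoid A] {ψ : AddChar R A}

/-- The character `c ↦ ψ (B c v)` of a submodule `C`, where `B` is a bilinear pairing. For
primitive `ψ` it is trivial exactly when `v` is orthogonal to `C`, so summing it over `C` detects
orthogonality. -/
def pairingChar (ψ : AddChar R A) (B : M →ₗ[R] N →ₗ[R] R) (C : Submodule R M) (v : N) :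
    AddChar C A :=
  ψ.compAddMonoidHom ((B.flip v).domRestrict C).toAddMonoidHom

theorem pairingChar_apply (B : M →ₗ[R] N →ₗ[R] R) (C : Submodule R M) (v : N) (c : C) :
    pairingChar ψ B C v c = ψ (B c v) :=
  rfl

theorem pairingChar_eq_zero_iff (hψ : ψ.IsPrimitive) (B : M →ₗ[R] N →ₗ[R] R)
    (C : Submodule R M) (v : N) : pairingChar ψ B C v = 0 ↔ v ∈ C.orthogonalBilin B := by
  rw [AddChar.eq_zero_iff, Submodule.mem_orthogonalBilin_iff]
  constructor
  · intro trivial_on_C c hc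
    by_contra hcv
    obtain ⟨t, ht⟩ := AddChar.ne_one_iff.1 (hψ hcv)
    refine ht ?_
    simpa [pairingChar_apply, mul_comm] using trivial_on_C (t • ⟨c, hc⟩)
  · intro orthogonal c
    rw [pairingChar_apply, orthogonal c c.2, AddChar.map_zero_eq_one]

end Character

variable [CommSemiring A] [IsDomain A] {ψ : AddChar R A}

theorem sum_addChar_pairing (hψ : ψ.IsPrimitive) (B : M →ₗ[R] N →ₗ[R] R) (C : Submodule R M)
    [Fintype C] (v : N) [Decidable (v ∈ C.orthogonalBilin B)] :
    ∑ c : C, ψ (B c v) = if v ∈ C.orthogonalBilin B then (Fintype.card C : A) else 0 := by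
  classical
  simpa only [pairingChar_apply, pairingChar_eq_zero_iff hψ] using
    AddChar.sum_eq_ite (pairingChar ψ B C v)

theorem sum_fourier_eq_card_mul_sum_orthogonal (hψ : ψ.IsPrimitive) (B : M →ₗ[R] N →ₗ[R] R)
    (C : Submodule R M) [Fintype C] [Fintype N] [Fintype (C.orthogonalBilin B)] (f : N → A) :
    ∑ c : C, ∑ v, ψ (B c v) * f v = Fintype.card C * ∑ v : C.orthogonalBilin B, f v := by
  classical
  calc ∑ c : C, ∑ v, ψ (B c v) * f v
      = ∑ v, (∑ c : C, ψ (B c v)) * f v := by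
        rw [sum_comm]
        simp only [sum_mul]
    _ = ∑ v with v ∈ C.orthogonalBilin B, Fintype.card C * f v := by
        simp only [sum_addChar_pairing hψ, ite_mul, zero_mul, sum_filter]
    _ = Fintype.card C * ∑ v : C.orthogonalBilin B, f v := by
        rw [← mul_sum, sum_subtype _ (p := (· ∈ C.orthogonalBilin B)) (by simp)]

end PoissonSummation

section LinearCode

variable {ι R A : Type*} [Fintype ι] [CommRing R]

/-- The dual `C⊥` of a linear code `C ⊆ R ^ ι` with respect to the standard dot product. -/
abbrev dualCode (C : Submodule R (ι → R)) : Submodule R (ι → R) :=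
  C.orthogonalBilin (dotProductBilin R R)

/-- The weight enumerator `W_C(x, y)` of a linear code, evaluated at elements `x` and `y` of a
commutative semiring; taking `x` and `y` to be indeterminates recovers the polynomial. -/
def weightEnumerator [DecidableEq R] [CommSemiring A] (C : Submodule R (ι → R)) [Fintype C]
    (x y : A) : A :=
  ∑ c : C, x ^ (Fintype.card ι - hammingNorm (c : ι → R)) * y ^ hammingNorm (c : ι → R)

theorem map_weightEnumerator [DecidableEq R] {B : Type*} [CommSemiring A] [CommSemiring B]
    (φ : A →+* B) (C : Submodule R (ι → R)) [Fintype C] (x y : A) :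
    φ (weightEnumerator C x y) = weightEnumerator C (φ x) (φ y) := by
  simp only [weightEnumerator, map_sum, map_mul, map_pow]

theorem pow_mul_pow_hammingNorm {α M : Type*} [Zero α] [DecidableEq α] [CommMonoid M] (c : ι → α)
    (x y : M) :
    x ^ (Fintype.card ι - hammingNorm c) * y ^ hammingNorm c =
      ∏ j, if c j = 0 then x else y := by
  have card_zeros : Fintype.card ι - hammingNorm c = #{j | c j = 0} := by
    rw [← card_univ, ← card_filter_add_card_filter_not (fun j ↦ c j = 0)]
    exact Nat.add_sub_cancel _ _
  rw [prod_ite, prod_const, prod_const, card_zeros, hammingNorm]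

theorem addChar_sum_eq_prod {G M : Type*} [AddCommMonoid G] [CommMonoid M] (ψ : AddChar G M)
    (g : ι → G) : ψ (∑ j, g j) = ∏ j, ψ (g j) :=
  map_prod ψ.toMonoidHom (fun j ↦ Multiplicative.ofAdd (g j)) univ

theorem sum_addChar_dotProduct_mul_prod [Fintype R] [DecidableEq ι] [CommSemiring A]
    (ψ : AddChar R A) (c : ι → R) (f : R → A) :
    ∑ v : ι → R, ψ (c ⬝ᵥ v) * ∏ j, f (v j) = ∏ j, ∑ t, ψ (c j * t) * f t := by
  simp only [Fintype.prod_sum, prod_mul_distrib, dotProduct, addChar_sum_eq_prod]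

variable [Fintype R] [DecidableEq R] [CommRing A] [IsDomain A] {ψ : AddChar R A}

theorem sum_addChar_mul_ite (hψ : ψ.IsPrimitive) (s : R) (x y : A) :
    ∑ t, ψ (s * t) * (if t = 0 then x else y) =
      if s = 0 then x + (Fintype.card R - 1) * y else x - y := by
  calc ∑ t, ψ (s * t) * (if t = 0 then x else y)
      = ∑ t, (ψ (t * s) * y + if t = 0 then x - y else 0) := by
        refine sum_congr rfl fun t _ ↦ ?_
        split_ifs with ht
        · simp [ht]
        · rw [mul_comm s t, add_zero]
    _ = (if s = 0 then (Fintype.card R : A) else 0) * y + (x - y) := by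
        simp [sum_add_distrib, ← sum_mul, AddChar.sum_mulShift s hψ]
    _ = if s = 0 then x + (Fintype.card R - 1) * y else x - y := by
        split_ifs <;> ring

theorem macwilliams_classical_general (hψ : ψ.IsPrimitive) (C : Submodule R (ι → R)) [Fintype C]
    [Fintype (dualCode C)] (x y : A) :
    Fintype.card C * weightEnumerator (dualCode C) x y =
      weightEnumerator C (x + (Fintype.card R - 1) * y) (x - y) := by
  classical
  simp only [weightEnumerator, pow_mul_pow_hammingNorm, ← sum_addChar_mul_ite hψ,
    ← sum_addChar_dotProduct_mul_prod]
  exact (sum_fourier_eq_card_mul_sum_orthogonal hψ (dotProductBilin R R) C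
    fun v ↦ ∏ j, if v j = 0 then x else y).symm

end LinearCode

theorem exists_submodule_mem_iff {R M : Type*} [Ring R] [AddCommGroup M] [Module R M] {S : Finset M}
    (zero_mem : 0 ∈ S) (sub_mem : ∀ x ∈ S, ∀ y ∈ S, x - y ∈ S)
    (smul_mem : ∀ a : R, ∀ x ∈ S, a • x ∈ S) : ∃ C : Submodule R M, ∀ c, c ∈ S ↔ c ∈ C := by
  refine ⟨⟨⟨⟨S, fun {x y} hx hy ↦ ?_⟩, zero_mem⟩, fun a x ↦ smul_mem a x⟩, fun _ ↦ Iff.rfl⟩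
  simpa using sub_mem x hx (0 - y) (sub_mem 0 zero_mem y hy)

theorem exists_isPrimitive_addChar_mvPolynomial (F σ : Type*) [Field F] [Finite F] :
    ∃ ψ : AddChar F (MvPolynomial σ ℂ), ψ.IsPrimitive :=
  ⟨_, (AddChar.FiniteField.primitiveChar_to_Complex_isPrimitive F).compMulHom_of_isPrimitive
    (f := (MvPolynomial.C : ℂ →+* MvPolynomial σ ℂ)) (C_injective σ ℂ)⟩

section FiniteField

variable {F : Type} [Field F] [Fintype F] {n : ℕ} {Cd : Finset (Fin n → F)}
  {C : Submodule F (Fin n → F)}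

theorem mem_dualLinearCode_iff_mem_dualCode (hCd : ∀ c, c ∈ Cd ↔ c ∈ C) (v : Fin n → F) :
    v ∈ dualLinearCode n Cd ↔ v ∈ dualCode C := by
  simp [dualLinearCode, dualCode, dotProduct, hCd]

theorem hammingWeightEnum_eq_weightEnumerator [DecidableEq F] [Fintype C]
    (hCd : ∀ c, c ∈ Cd ↔ c ∈ C) :
    hammingWeightEnum n Cd = weightEnumerator C (X 0) (X 1) := by
  refine (sum_subtype Cd hCd _).trans (Fintype.sum_congr _ _ fun c ↦ ?_)
  simp only [hammingNorm, Fintype.card_fin]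
  congr!

end FiniteField

/-- classical MacWilliams theorem. For a linear code `C` over the
field `GF(q)`, `W_{C⊥}(x,y) = |C|⁻¹ W_C(x + (q-1)y, x - y)`. -/
theorem macwilliams_classical {F : Type} [Field F] [Fintype F] [DecidableEq F]
    (n : ℕ) (hn : 1 ≤ n)
    (Cd : Finset (Fin n → F))
    (hC0 : (0 : Fin n → F) ∈ Cd)
    (hCsub : ∀ x ∈ Cd, ∀ y ∈ Cd, x - y ∈ Cd)
    (hCsmul : ∀ (a : F), ∀ x ∈ Cd, a • x ∈ Cd) :
    hammingWeightEnum n (dualLinearCode n Cd)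
      = (Cd.card : ℂ)⁻¹ •
          MvPolynomial.aeval
            ![MvPolynomial.X 0 + MvPolynomial.C ((Fintype.card F : ℂ) - 1) * MvPolynomial.X 1,
              MvPolynomial.X 0 - MvPolynomial.X 1]
            (hammingWeightEnum n Cd) := by
  classical
  obtain ⟨C, hC⟩ := exists_submodule_mem_iff hC0 hCsub hCsmul
  obtain ⟨ψ, hψ⟩ := exists_isPrimitive_addChar_mvPolynomial F (Fin 2)
  have card_ne_zero : (#Cd : ℂ) ≠ 0 := Nat.cast_ne_zero.2 (card_ne_zero_of_mem hC0)
  rw [eq_inv_smul_iff₀ card_ne_zero, hammingWeightEnum_eq_weightEnumerator hC,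
    hammingWeightEnum_eq_weightEnumerator (mem_dualLinearCode_iff_mem_dualCode hC),
    ← AlgHom.coe_toRingHom, map_weightEnumerator]
  simpa [Algebra.smul_def, Fintype.card_of_subtype Cd hC] using
    macwilliams_classical_general hψ C (X 0) (X 1)
end
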